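/- Let n(t) := (cos t, sin t, 0), fix 0 < κ² < 3, and set c_κ² := (κ² − √(κ⁴ + 16) + 4)/2. If u : ℝ → ℝ³ is C¹, 2π-periodic, and |u(t)| = 1 for all t, then the strict inequality ∫_{−π}^{π} |u'(t)|² dt + κ² ∫_{−π}^{π} |u(t) × n(t)|² dt > 2π c_κ² holds; i.e., no S²-valued configuration attains equality in the sharp Poincaré-type inequality when 0 < κ² < 3. -/

import Mathlib

open Real Set MeasureTheory

/-- Squared Euclidean norm of a vector in `ℝ³`. -/
noncomputable def sq3 (v : Fin 3 → ℝ) : ℝ := v 0 ^ 2 + v 1 ^ 2 + v 2 ^ 2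

/-- The outward unit normal `n(t) = (cos t, sin t, 0)` to the unit circle. -/
noncomputable def nvec (t : ℝ) : Fin 3 → ℝ := ![Real.cos t, Real.sin t, 0]

lemma wirt (f f' : ℝ → ℝ) (hf : ∀ t, HasDerivAt f (f' t) t) (hf' : Continuous f')
    (hp : f π = f (-π)) (h0 : ∫ t in (-π)..π, f t = 0) :
    ∫ t in (-π)..π, f t ^ 2 ≤ ∫ t in (-π)..π, f' t ^ 2 := by
  have hab : -π < π := by linarith [pi_pos]
  have hfc : Continuous f := continuous_iff_continuousAt.2 fun t => (hf t).continuousAt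
  have mem : ∀ g : ℝ → ℝ, Continuous g →
      MemLp (fun t => (g t : ℂ)) 2 (volume.restrict (Ioc (-π) π)) := by
    intro g hg
    have hc : Continuous (fun t => (g t : ℂ)) := Complex.continuous_ofReal.comp hg
    obtain ⟨C, hC⟩ := (isCompact_Icc (a := -π) (b := π)).exists_bound_of_continuousOn
      hc.continuousOn
    refine MemLp.of_bound hc.aestronglyMeasurable C ?_
    exact (ae_restrict_iff' measurableSet_Ioc).2
      (Filter.Eventually.of_forall fun t ht => hC t (Ioc_subset_Icc_self ht))
  have H1 := hasSum_sq_fourierCoeffOn hab (mem f hfc)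
  have H2 := hasSum_sq_fourierCoeffOn hab (mem f' hf')
  have key := hasSum_le (fun n : ℤ => ?_) H1 H2
  · simp only [Complex.norm_real, Real.norm_eq_abs, sq_abs, smul_eq_mul] at key
    have hpos : 0 < (π - -π)⁻¹ := by
      apply inv_pos.2; linarith
    exact le_of_mul_le_mul_left key hpos
  · by_cases hn : n = 0
    · subst hn
      have : fourierCoeffOn hab (fun t => (f t : ℂ)) 0 = 0 := by
        rw [fourierCoeffOn_eq_integral]
        simp [intervalIntegral.integral_ofReal, h0]
      rw [this]; simp
    · have hc' : Continuous (fun t => (f' t : ℂ)) := Complex.continuous_ofReal.comp hf'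
      have := fourierCoeffOn_of_hasDerivAt hab (f := fun t => (f t : ℂ))
        (f' := fun t => (f' t : ℂ)) hn (fun t _ => (hf t).ofReal_comp)
        (hc'.intervalIntegrable _ _)
      rw [this, hp]
      have hn1 : (1:ℝ) ≤ |(n:ℝ)| := by
        have := Int.one_le_abs hn
        exact_mod_cast this
      have e : ‖(1 / (-2 * (π:ℂ) * Complex.I * n) *
        (fourier (-n) ((-π : ℝ) : AddCircle (π - -π)) * ((f (-π) : ℂ) - (f (-π) : ℂ)) -
          ((π:ℝ) - ((-π : ℝ):ℂ)) * fourierCoeffOn hab (fun t => (f' t : ℂ)) n))‖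
          = ‖fourierCoeffOn hab (fun t => (f' t : ℂ)) n‖ / |(n:ℝ)| := by
        have hpi : (π:ℂ) ≠ 0 := by exact_mod_cast pi_ne_zero
        have hnC : (n:ℂ) ≠ 0 := by exact_mod_cast hn
        have : (1 / (-2 * (π:ℂ) * Complex.I * n) *
        (fourier (-n) ((-π : ℝ) : AddCircle (π - -π)) * ((f (-π) : ℂ) - (f (-π) : ℂ)) -
          ((π:ℝ) - ((-π : ℝ):ℂ)) * fourierCoeffOn hab (fun t => (f' t : ℂ)) n))
          = fourierCoeffOn hab (fun t => (f' t : ℂ)) n / (Complex.I * n) := by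
          push_cast
          field_simp
          ring
        rw [this, norm_div, norm_mul, Complex.norm_I, one_mul, Complex.norm_intCast]
      rw [e]
      gcongr
      exact div_le_self (norm_nonneg _) hn1

lemma core (K l : ℝ) (hK : 0 < K) (hl1 : l < 1) (hlK : l < K)
    (heq : (2 - l) * (2 + K - l) = 4)
    (a b c a' b' c' : ℝ → ℝ)
    (ha : ∀ t, HasDerivAt a (a' t) t) (hb : ∀ t, HasDerivAt b (b' t) t)
    (hc : ∀ t, HasDerivAt c (c' t) t)
    (ha' : Continuous a') (hb' : Continuous b') (hc' : Continuous c')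
    (hap : a π = a (-π)) (hbp : b π = b (-π))
    (hu : ∀ t, a t ^ 2 + b t ^ 2 + c t ^ 2 = 1) :
    2 * π * l < ∫ t in (-π)..π, ((a' t - b t) ^ 2 + (b' t + a t) ^ 2 + c' t ^ 2
      + K * (b t ^ 2 + c t ^ 2)) := by
  have hab : -π < π := by linarith [pi_pos]
  have hac : Continuous a := continuous_iff_continuousAt.2 fun t => (ha t).continuousAt
  have hbc : Continuous b := continuous_iff_continuousAt.2 fun t => (hb t).continuousAt
  have hcc : Continuous c := continuous_iff_continuousAt.2 fun t => (hc t).continuousAt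
  obtain ⟨s, hs⟩ : ∃ s, s = 2 + K - l := ⟨_, rfl⟩
  have hs2 : 2 < s := by linarith
  obtain ⟨r, hr⟩ : ∃ r, r = 2 / s := ⟨_, rfl⟩
  have hrs : r * s = 2 := by rw [hr]; field_simp
  have hr0 : 0 < r := by rw [hr]; positivity
  have hr1 : r < 1 := by nlinarith
  have hl : l = 2 - 2 * r := by
    have : (2 - l) * s = 4 := by rw [hs]; exact heq
    have h2 : (2 - l - 2 * r) * s = 0 := by linarith
    rcases mul_eq_zero.1 h2 with h | h <;> linarith
  have hKs : K = s - 2 + l := by linarith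
  obtain ⟨m, hm⟩ : ∃ m, m = (∫ t in (-π)..π, a t) / (2 * π) := ⟨_, rfl⟩
  have h0 : ∫ t in (-π)..π, (a t - m) = 0 := by
    rw [intervalIntegral.integral_sub (hac.intervalIntegrable _ _) (by simp)]
    rw [intervalIntegral.integral_const, hm, smul_eq_mul]
    field_simp
    ring
  have W := wirt (fun t => a t - m) a' (fun t => (ha t).sub_const m) ha' (by simp [hap]) h0
  -- total derivative
  have hG : ∫ t in (-π)..π, (2 * (a' t * b t + a t * b' t)
      - 2 * r * (a' t * b t + (a t - m) * b' t)) = 0 := by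
    rw [intervalIntegral.integral_eq_sub_of_hasDerivAt
      (f := fun t => 2 * (a t * b t) - 2 * r * ((a t - m) * b t))]
    · simp [hap, hbp]
    · intro t _
      exact (((ha t).mul (hb t)).const_mul 2).sub
        ((((ha t).sub_const m).mul (hb t)).const_mul (2 * r))
    · exact Continuous.intervalIntegrable (by fun_prop) _ _
  set S : ℝ → ℝ := fun t => (1 - l) * m ^ 2 + (b' t + r * (a t - m)) ^ 2
    + (s - 1) * (b t - r * a' t) ^ 2 + c' t ^ 2 + (K - l) * c t ^ 2 with hS
  have hSc : Continuous S := by fun_prop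
  have hl1' : 0 < 1 - l := by linarith
  have hs1' : 0 < s - 1 := by linarith
  have hKl' : 0 < K - l := by linarith
  have hSpos : 0 < ∫ t in (-π)..π, S t := by
    refine intervalIntegral.integral_pos hab hSc.continuousOn (fun t _ => by
      simp only [hS]; positivity) ?_
    by_contra! hcon
    have hz : ∀ t ∈ Icc (-π) π, m = 0 ∧ b' t = - (r * a t) ∧ b t = r * a' t ∧ c t = 0 := by
      intro t ht
      have h := hcon t ht
      simp only [hS] at h
      have n1 : 0 ≤ (1 - l) * m ^ 2 := by positivity
      have n2 := sq_nonneg (b' t + r * (a t - m))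
      have n3 : 0 ≤ (s - 1) * (b t - r * a' t) ^ 2 := by positivity
      have n4 := sq_nonneg (c' t)
      have n5 : 0 ≤ (K - l) * c t ^ 2 := by positivity
      have z1 : (1 - l) * m ^ 2 = 0 := by linarith
      have z2 : (b' t + r * (a t - m)) ^ 2 = 0 := by linarith
      have z3 : (s - 1) * (b t - r * a' t) ^ 2 = 0 := by linarith
      have z5 : (K - l) * c t ^ 2 = 0 := by linarith
      have m0 : m = 0 := by simpa [hl1'.ne'] using z1
      have y2 : b' t + r * (a t - m) = 0 := by simpa using z2
      have y3 : b t - r * a' t = 0 := by simpa [hs1'.ne'] using z3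
      have y5 : c t = 0 := by simpa [hKl'.ne'] using z5
      rw [m0] at y2
      exact ⟨m0, by linarith, by linarith, y5⟩
    have hab0 : ∀ t ∈ Icc (-π) π, a t * b t = 0 := by
      intro t ht
      obtain ⟨-, e2, e3, e5⟩ := hz t ht
      have hD := (((ha t).pow 2).add ((hb t).pow 2)).add ((hc t).pow 2)
      have hE : (a ^ 2 + b ^ 2 + c ^ 2) = fun _ => (1:ℝ) := by
        ext t; simpa using hu t
      rw [hE] at hD
      have := hD.unique (hasDerivAt_const t (1:ℝ))
      rw [e5, e2] at this
      norm_num at this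
      have h4 : (1 - r ^ 2) * (a t * b t) = 0 := by
        linear_combination (r / 2) * this + a t * e3
      have : 1 - r ^ 2 ≠ 0 := by nlinarith
      simpa [this] using h4
    have h0m : (0:ℝ) ∈ Icc (-π) π := ⟨by linarith, by linarith⟩
    have hev : (fun t => a t * b t) =ᶠ[nhds 0] fun _ => (0:ℝ) := by
      filter_upwards [Icc_mem_nhds (a := -π) (b := π) (x := (0:ℝ)) (by linarith) (by linarith)]
        with t ht using hab0 t ht
    have hD0 := (((ha 0).mul (hb 0)).congr_of_eventuallyEq hev.symm).unique
      (hasDerivAt_const (0:ℝ) (0:ℝ))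
    obtain ⟨-, e2, e3, e5⟩ := hz 0 h0m
    have hu0 := hu 0
    rw [e5] at hu0
    rw [e2] at hD0
    have h6 : b 0 ^ 2 = r ^ 2 * a 0 ^ 2 := by
      linear_combination r * hD0 + b 0 * e3
    rcases mul_eq_zero.1 (hab0 0 h0m) with h | h
    · rw [h] at h6 hu0
      nlinarith
    · rw [h] at h6 hu0
      have : r ^ 2 * a 0 ^ 2 = 0 := by linarith
      have : a 0 ^ 2 = 0 := by simpa [hr0.ne'] using this
      linarith
  have p0 : 0 ≤ 1 - r ^ 2 * (s - 1) := by nlinarith [sq_nonneg (r - 1)]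
  have hI : ∫ t in (-π)..π, ((a' t - b t) ^ 2 + (b' t + a t) ^ 2 + c' t ^ 2
      + K * (b t ^ 2 + c t ^ 2)) = ∫ t in (-π)..π, (l + S t
      + (2 * (a' t * b t + a t * b' t) - 2 * r * (a' t * b t + (a t - m) * b' t))
      + (2 * (1 - l) * m) * (a t - m)
      + (1 - r ^ 2 * (s - 1)) * (a' t ^ 2) - (1 - r ^ 2 * (s - 1)) * ((a t - m) ^ 2)) := by
    congr 1
    ext t
    have h1 := hu t
    have h2 : l = l * (a t ^ 2 + b t ^ 2 + c t ^ 2) := by rw [h1, mul_one]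
    rw [hS]
    have e1 : r ^ 2 * s = 2 * r := by rw [pow_two, mul_assoc, hrs]; ring
    have : ∀ A B C A' B' C' : ℝ, (A' - B) ^ 2 + (B' + A) ^ 2 + C' ^ 2
      + K * (B ^ 2 + C ^ 2) = l * (A ^ 2 + B ^ 2 + C ^ 2) + ((1 - l) * m ^ 2 + (B' + r * (A - m)) ^ 2
    + (s - 1) * (B - r * A') ^ 2 + C' ^ 2 + (K - l) * C ^ 2)
      + (2 * (A' * B + A * B') - 2 * r * (A' * B + (A - m) * B'))
      + (2 * (1 - l) * m) * (A - m)
      + (1 - r ^ 2 * (s - 1)) * (A' ^ 2) - (1 - r ^ 2 * (s - 1)) * ((A - m) ^ 2) := by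
      intro A B C A' B' C'
      rw [hKs]
      linear_combination (2 * A' * B) * hrs - (A - m) ^ 2 * e1 - ((A-m)^2) * hl
    rw [this, ← h2]
  rw [hI]
  have i1 : ∀ g : ℝ → ℝ, Continuous g → IntervalIntegrable g volume (-π) π :=
    fun g hg => hg.intervalIntegrable _ _
  rw [intervalIntegral.integral_sub (i1 _ (by fun_prop)) (i1 _ (by fun_prop)),
    intervalIntegral.integral_add (i1 _ (by fun_prop)) (i1 _ (by fun_prop)),
    intervalIntegral.integral_add (i1 _ (by fun_prop)) (i1 _ (by fun_prop)),
    intervalIntegral.integral_add (i1 _ (by fun_prop)) (i1 _ (by fun_prop)),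
    intervalIntegral.integral_add (i1 _ (by fun_prop)) (i1 _ (by fun_prop)), hG,
    intervalIntegral.integral_const_mul, intervalIntegral.integral_const_mul,
    intervalIntegral.integral_const_mul, h0, intervalIntegral.integral_const, smul_eq_mul]
  have := mul_le_mul_of_nonneg_left W p0
  linarith

/-- **No `S²`-valued configuration attains equality in the sharp Poincaré-type
inequality when `0 < κ² < 3`**: for unit-norm `C¹` `2π`-periodic maps the strict
inequality `∫ |u'|² + κ² ∫ |u × n|² > 2π c_κ²` holds, where
`c_κ² = (κ² − √(κ⁴+16) + 4)/2`. -/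
theorem no_sphere_valued_equality_small_kappa
    (κ : ℝ) (hκ : 0 < κ ^ 2) (hκ3 : κ ^ 2 < 3)
    (u : ℝ → Fin 3 → ℝ)
    (hu : ContDiff ℝ 1 u)
    (hper : ∀ t : ℝ, u (t + 2 * π) = u t)
    (hunit : ∀ t : ℝ, sq3 (u t) = 1) :
    2 * π * ((κ ^ 2 - Real.sqrt (κ ^ 4 + 16) + 4) / 2) <
      (∫ t in (-π)..π, sq3 (deriv u t))
        + κ ^ 2 * ∫ t in (-π)..π, sq3 (crossProduct (u t) (nvec t)) := by
  have hd : ∀ i t, HasDerivAt (fun t => u t i) (deriv u t i) t := fun i t =>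
    hasDerivAt_pi.1 ((hu.differentiable one_ne_zero t).hasDerivAt) i
  have hdc : Continuous (deriv u) := hu.continuous_deriv le_rfl
  have hdci : ∀ i, Continuous (fun t => deriv u t i) := fun i => (continuous_apply i).comp hdc
  have huc : ∀ i, Continuous (fun t => u t i) := fun i => (continuous_apply i).comp hu.continuous
  have hpe : u π = u (-π) := by rw [← hper (-π)]; congr 1; ring
  have c0 := huc 0
  have c1 := huc 1
  have c2 := huc 2
  have d0 := hdci 0
  have d1 := hdci 1
  have d2 := hdci 2
  obtain ⟨q, hq⟩ : ∃ q, q = Real.sqrt (κ ^ 4 + 16) := ⟨_, rfl⟩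
  have hq2 : q ^ 2 = κ ^ 4 + 16 := by rw [hq]; exact Real.sq_sqrt (by positivity)
  have hq0 : 0 ≤ q := by rw [hq]; positivity
  rw [← hq]
  obtain ⟨K, hK⟩ : ∃ K, K = κ ^ 2 := ⟨_, rfl⟩
  have hK4 : κ ^ 4 = K ^ 2 := by rw [hK]; ring
  rw [hK4] at hq2
  rw [← hK] at hκ hκ3 ⊢
  have key := core K ((K - q + 4) / 2) hκ (by nlinarith) (by nlinarith) (by nlinarith)
    (fun t => u t 0 * cos t + u t 1 * sin t) (fun t => u t 1 * cos t - u t 0 * sin t)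
    (fun t => u t 2)
    (fun t => (deriv u t 0 * cos t + u t 0 * (-sin t)) + (deriv u t 1 * sin t + u t 1 * cos t))
    (fun t => (deriv u t 1 * cos t + u t 1 * (-sin t)) - (deriv u t 0 * sin t + u t 0 * cos t))
    (fun t => deriv u t 2)
    (fun t => ((hd 0 t).mul (hasDerivAt_cos t)).add ((hd 1 t).mul (hasDerivAt_sin t)))
    (fun t => ((hd 1 t).mul (hasDerivAt_cos t)).sub ((hd 0 t).mul (hasDerivAt_sin t)))
    (hd 2) (by fun_prop) (by fun_prop) d2 (by simp [hpe]) (by simp [hpe])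
    (fun t => by
      have := hunit t
      unfold sq3 at this
      linear_combination this + (u t 0 ^ 2 + u t 1 ^ 2) * (sin_sq_add_cos_sq t))
  refine key.trans_eq ?_
  rw [← intervalIntegral.integral_const_mul, ← intervalIntegral.integral_add]
  · congr 1
    ext t
    simp only [sq3, nvec, cross_apply]
    simp
    linear_combination (deriv u t 0 ^ 2 + deriv u t 1 ^ 2 - K * u t 2 ^ 2) * (sin_sq_add_cos_sq t)
  · apply Continuous.intervalIntegrable
    unfold sq3
    fun_prop
  · apply Continuous.intervalIntegrable
    simp only [sq3, nvec, cross_apply]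
    simp
    fun_prop
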